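/- Fuchs–van de Graaf inequalities for sub-normalized states: let ρ, τ be n×n positive semidefinite complex matrices with tr ρ ≤ 1 and tr τ ≤ 1. Then Δ(ρ,τ) ≤ P(ρ,τ) ≤ √(2·Δ(ρ,τ) − Δ(ρ,τ)²) ≤ √(2·Δ(ρ,τ)). -/

import Mathlib

/-!
The trace norm is dual to the unitary group: `‖M‖₁ = max_W Re tr (W M)` over unitaries `W`
(`re_trace_mul_le_traceNorm`, `exists_re_trace_mul_eq_traceNorm`), which follows from the polar
decomposition `exists_polar`. Write `A = √ρ`, `B = √τ`, `f = ‖A B‖₁`, `p = √(1 - tr ρ)`,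
`q = √(1 - tr τ)`, so that the generalized fidelity is `(f + p q)²`, and let `Δ` be the generalized
trace distance.

For `Δ ≤ P`, choose a unitary `U` with `Re tr (U A B) = f` and put `C = B U`. Then `C Cᴴ = τ`,
and `ρ - τ` is the symmetrised product of `A - C` and `A + C`, whose squared Hilbert–Schmidt norms
are `tr ρ + tr τ ∓ 2 f`. The Cauchy–Schwarz inequality, in the weighted form
`2 c x y ≤ c² x² + y²` (`traceNorm_sub_le`), is added to its scalar analogue
`|p² - q²| = |p - q| (p + q)`. This gives `2 c Δ ≤ c² (1 - f - p q) + (1 + f + p q)` for all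
real `c`, and nonpositivity of the discriminant is `Δ² ≤ 1 - (f + p q)²`.

For the upper bound on `P`, the Powers–Størmer inequality (`powers_stormer`) and `Re tr (A B) ≤ f`
give `‖ρ - τ‖₁ ≥ tr ρ + tr τ - 2 f`. Together with `p q ≥ min (p²) (q²)` this yields
`0 ≤ 1 - Δ ≤ f + p q`, and squaring gives the bound.
-/

open Matrix
open scoped ComplexOrder

/-- Real power of a Hermitian matrix via the spectral decomposition (junk value `0`
if the matrix is not Hermitian). -/
noncomputable def mpow {d : Type*} [Fintype d] [DecidableEq d]
    (M : Matrix d d ℂ) (c : ℝ) : Matrix d d ℂ :=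
  if hM : M.IsHermitian then hM.cfc (fun t => t ^ c) else 0

/-- The trace norm `‖X‖₁ = tr √(X† X)`. -/
noncomputable def traceNorm {d : Type*} [Fintype d] [DecidableEq d]
    (X : Matrix d d ℂ) : ℝ :=
  ((mpow (Xᴴ * X) (1/2)).trace).re

/-- The generalized trace distance of sub-normalized states,
`Δ(ρ,τ) = ½‖ρ - τ‖₁ + ½|tr ρ - tr τ|`. -/
noncomputable def gTraceDist {d : Type*} [Fintype d] [DecidableEq d]
    (ρ τ : Matrix d d ℂ) : ℝ :=
  (1/2) * traceNorm (ρ - τ) + (1/2) * |ρ.trace.re - τ.trace.re|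

/-- The generalized fidelity of sub-normalized states,
`F̄(ρ,τ) = (tr √(√τ ρ √τ) + √((1 - tr ρ)(1 - tr τ)))²`. -/
noncomputable def gFidelity {d : Type*} [Fintype d] [DecidableEq d]
    (ρ τ : Matrix d d ℂ) : ℝ :=
  (((mpow (mpow τ (1/2) * ρ * mpow τ (1/2)) (1/2)).trace).re
    + Real.sqrt ((1 - ρ.trace.re) * (1 - τ.trace.re))) ^ 2

/-- The purified distance of sub-normalized states, `P(ρ,τ) = √(1 - F̄(ρ,τ))`. -/
noncomputable def purifiedDist {d : Type*} [Fintype d] [DecidableEq d]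
    (ρ τ : Matrix d d ℂ) : ℝ :=
  Real.sqrt (1 - gFidelity ρ τ)

/-! ### Spectral decomposition and square roots -/

/-- Spectral decomposition of a Hermitian matrix, together with the resulting formula for its real
powers. -/
lemma exists_spectral {n : ℕ} {M : Matrix (Fin n) (Fin n) ℂ} (hM : M.IsHermitian) :
    ∃ (V : Matrix (Fin n) (Fin n) ℂ) (l : Fin n → ℝ), Vᴴ * V = 1 ∧ V * Vᴴ = 1 ∧
      M = V * diagonal (fun i => (l i : ℂ)) * Vᴴ ∧
      (∀ c : ℝ, mpow M c = V * diagonal (fun i => ((l i ^ c : ℝ) : ℂ)) * Vᴴ) ∧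
      (M.PosSemidef → ∀ i, 0 ≤ l i) := by
  refine ⟨hM.eigenvectorUnitary, hM.eigenvalues, ?_, ?_, ?_, ?_, ?_⟩
  · exact Unitary.coe_star_mul_self hM.eigenvectorUnitary
  · exact Unitary.coe_mul_star_self hM.eigenvectorUnitary
  · exact hM.spectral_theorem
  · intro c
    rw [mpow, dif_pos hM]
    rfl
  · intro h
    exact h.eigenvalues_nonneg

lemma posSemidef_conj_diagonal {n : ℕ} (V : Matrix (Fin n) (Fin n) ℂ) {l : Fin n → ℝ}
    (hl : ∀ i, 0 ≤ l i) : (V * diagonal (fun i => (l i : ℂ)) * Vᴴ).PosSemidef := by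
  apply PosSemidef.mul_mul_conjTranspose_same
  rw [posSemidef_diagonal_iff]
  intro i
  exact_mod_cast hl i

lemma conj_mul_conj {n : ℕ} {V : Matrix (Fin n) (Fin n) ℂ} (hV : Vᴴ * V = 1)
    (d e : Fin n → ℂ) :
    (V * diagonal d * Vᴴ) * (V * diagonal e * Vᴴ) = V * diagonal (fun i => d i * e i) * Vᴴ := by
  rw [← diagonal_mul_diagonal]
  calc _ = V * diagonal d * (Vᴴ * V) * diagonal e * Vᴴ := by simp only [Matrix.mul_assoc]
    _ = _ := by rw [hV]; simp only [Matrix.mul_assoc, Matrix.one_mul]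

lemma posSemidef_mpow {n : ℕ} {M : Matrix (Fin n) (Fin n) ℂ} (hM : M.PosSemidef) (c : ℝ) :
    (mpow M c).PosSemidef := by
  obtain ⟨V, l, -, -, -, hp, hl⟩ := exists_spectral hM.1
  rw [hp]
  exact posSemidef_conj_diagonal V fun i => Real.rpow_nonneg (hl hM i) c

lemma mpow_half_mul_self {n : ℕ} {M : Matrix (Fin n) (Fin n) ℂ} (hM : M.PosSemidef) :
    mpow M (1/2) * mpow M (1/2) = M := by
  obtain ⟨V, l, hV, -, hM', hp, hl⟩ := exists_spectral hM.1
  rw [hp, conj_mul_conj hV]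
  conv_rhs => rw [hM']
  congr 3
  funext i
  rw [← Complex.ofReal_mul, ← Real.sqrt_eq_rpow, Real.mul_self_sqrt (hl hM i)]

/-! ### Polar decomposition -/

/-- A matrix whose columns are pairwise orthogonal is a unitary times the diagonal matrix of the
column norms. -/
lemma exists_unitary_mul_diagonal {n : ℕ} {G : Matrix (Fin n) (Fin n) ℂ} {l : Fin n → ℝ}
    (hl : ∀ i, 0 ≤ l i) (hG : Gᴴ * G = diagonal (fun i => (l i : ℂ))) :
    ∃ B : Matrix (Fin n) (Fin n) ℂ, Bᴴ * B = 1 ∧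
      G = B * diagonal (fun i => ((l i ^ (1/2 : ℝ) : ℝ) : ℂ)) := by
  have hG' : ∀ i j, ∑ k, star (G k i) * G k j = if i = j then (l i : ℂ) else 0 := by
    intro i j
    have := congrFun (congrFun hG i) j
    simpa [Matrix.mul_apply, diagonal_apply] using this
  let w : Fin n → EuclideanSpace ℂ (Fin n) := fun i =>
    WithLp.toLp 2 (fun k => (((√(l i))⁻¹ : ℝ) : ℂ) * G k i)
  have hw : ∀ i j, inner ℂ (w i) (w j) =
      ((((√(l i))⁻¹ * (√(l j))⁻¹ : ℝ)) : ℂ) * if i = j then (l i : ℂ) else 0 := by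
    intro i j
    rw [← hG', Finset.mul_sum, PiLp.inner_apply]
    refine Finset.sum_congr rfl fun k _ => ?_
    simp [w]
    ring
  have hon : Orthonormal ℂ (({i | l i ≠ 0} : Set (Fin n)).domRestrict w) := by
    rw [orthonormal_iff_ite]
    rintro ⟨i, hi⟩ ⟨j, hj⟩
    simp only [Set.domRestrict_apply, hw, Subtype.mk.injEq]
    split_ifs with h
    · subst h
      have hi' : l i ≠ 0 := hi
      rw [← mul_inv, Real.mul_self_sqrt (hl i), ← Complex.ofReal_mul, inv_mul_cancel₀ hi']
      simp
    · simp
  obtain ⟨b, hb⟩ := hon.exists_orthonormalBasis_extension_of_card_eq (by simp)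
  refine ⟨Matrix.of fun k i => b i k, ?_, ?_⟩
  · ext i j
    have := orthonormal_iff_ite.mp b.orthonormal i j
    rw [PiLp.inner_apply] at this
    simp only [RCLike.inner_apply] at this
    simp only [Matrix.mul_apply, conjTranspose_apply, of_apply, one_apply, ← this]
    exact Finset.sum_congr rfl fun k _ => mul_comm _ _
  · ext k i
    rw [mul_diagonal, of_apply, ← Real.sqrt_eq_rpow]
    by_cases hi : l i = 0
      -- a column of norm zero vanishes
    · have h0 := hG' i i
      rw [if_pos rfl, hi] at h0
      have h1 : ∑ k, ‖G k i‖ ^ 2 = 0 := by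
        have : ((∑ k, ‖G k i‖ ^ 2 : ℝ) : ℂ) = 0 := by
          rw [← Complex.ofReal_zero, ← h0]
          push_cast
          refine Finset.sum_congr rfl fun k _ => ?_
          exact (Complex.conj_mul' _).symm
        exact_mod_cast this
      have h2 := (Finset.sum_eq_zero_iff_of_nonneg (fun k _ => by positivity)).mp h1 k
        (Finset.mem_univ k)
      simpa [hi] using h2
    · have h1 : √(l i) ≠ 0 := (Real.sqrt_ne_zero (hl i)).mpr hi
      have h2 : ((√(l i) : ℝ) : ℂ) ≠ 0 := by exact_mod_cast h1
      rw [hb i hi]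
      simp only [w]
      push_cast
      field_simp

/-- Polar decomposition: every square matrix is a unitary times its absolute value. -/
lemma exists_polar {n : ℕ} (M : Matrix (Fin n) (Fin n) ℂ) :
    ∃ U : Matrix (Fin n) (Fin n) ℂ, Uᴴ * U = 1 ∧ M = U * mpow (Mᴴ * M) (1/2) := by
  have hN := posSemidef_conjTranspose_mul_self M
  obtain ⟨V, l, hV, hV', hM, hp, hl⟩ := exists_spectral hN.1
  have hG : (M * V)ᴴ * (M * V) = diagonal (fun i => (l i : ℂ)) := by
    calc (M * V)ᴴ * (M * V) = Vᴴ * (Mᴴ * M) * V := by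
          rw [conjTranspose_mul]; simp only [Matrix.mul_assoc]
      _ = (Vᴴ * V) * diagonal (fun i => (l i : ℂ)) * (Vᴴ * V) := by
          rw [hM]; simp only [Matrix.mul_assoc]
      _ = _ := by rw [hV, Matrix.one_mul, Matrix.mul_one]
  obtain ⟨B, hB, hGB⟩ := exists_unitary_mul_diagonal (hl hN) hG
  refine ⟨B * Vᴴ, ?_, ?_⟩
  · calc (B * Vᴴ)ᴴ * (B * Vᴴ) = V * (Bᴴ * B) * Vᴴ := by
          rw [conjTranspose_mul, conjTranspose_conjTranspose]; simp only [Matrix.mul_assoc]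
      _ = 1 := by rw [hB, Matrix.mul_one, hV']
  · rw [hp]
    calc M = M * V * Vᴴ := by rw [Matrix.mul_assoc, hV', Matrix.mul_one]
      _ = B * (Vᴴ * V) * diagonal (fun i => ((l i ^ (1/2 : ℝ) : ℝ) : ℂ)) * Vᴴ := by
          rw [hV, Matrix.mul_one, ← hGB]
      _ = _ := by simp only [Matrix.mul_assoc]

/-! ### Unitary duality for the trace norm -/

lemma re_trace_conjTranspose {n : ℕ} (M : Matrix (Fin n) (Fin n) ℂ) :
    Mᴴ.trace.re = M.trace.re := by
  rw [trace_conjTranspose]; simp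

lemma re_trace_mul_conjTranspose_nonneg {n : ℕ} (M : Matrix (Fin n) (Fin n) ℂ) :
    0 ≤ (M * Mᴴ).trace.re :=
  (Complex.le_def.mp (posSemidef_self_mul_conjTranspose M).trace_nonneg).1

lemma re_trace_mul_nonneg {n : ℕ} {P Q : Matrix (Fin n) (Fin n) ℂ}
    (hP : P.PosSemidef) (hQ : Q.PosSemidef) : 0 ≤ (P * Q).trace.re := by
  have hR := (posSemidef_mpow hP (1/2)).1
  have h := hQ.conjTranspose_mul_mul_same (mpow P (1/2))
  have h2 : (P * Q).trace = ((mpow P (1/2))ᴴ * Q * mpow P (1/2)).trace := by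
    rw [hR.eq, trace_mul_cycle, mpow_half_mul_self hP]
  rw [h2]
  exact (Complex.le_def.mp h.trace_nonneg).1

/-- For `P ≥ 0` and `U` unitary, `tr (P (1 - U)ᴴ (1 - U)) ≥ 0` amounts to `Re tr (U P) ≤ tr P`. -/
lemma re_trace_unitary_mul_le {n : ℕ} {U P : Matrix (Fin n) (Fin n) ℂ}
    (hU : Uᴴ * U = 1) (hP : P.PosSemidef) : (U * P).trace.re ≤ P.trace.re := by
  have h := re_trace_mul_nonneg hP (posSemidef_conjTranspose_mul_self (1 - U))
  have e : P * ((1 - U)ᴴ * (1 - U)) = P + P - P * U - P * Uᴴ := by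
    rw [conjTranspose_sub, conjTranspose_one]
    have : (1 - Uᴴ) * (1 - U) = 1 + Uᴴ * U - U - Uᴴ := by noncomm_ring
    rw [this, hU]; noncomm_ring
  have e2 : (P * Uᴴ).trace.re = (U * P).trace.re := by
    rw [← re_trace_conjTranspose, conjTranspose_mul, conjTranspose_conjTranspose, hP.1.eq]
  rw [e, trace_sub, trace_sub, trace_add, trace_mul_comm P U] at h
  simp only [Complex.sub_re, Complex.add_re] at h
  linarith

/-- One half of the duality `‖M‖₁ = max_W Re tr (W M)` over unitaries `W`. -/
lemma re_trace_mul_le_traceNorm {n : ℕ} {W : Matrix (Fin n) (Fin n) ℂ}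
    (hW : Wᴴ * W = 1) (M : Matrix (Fin n) (Fin n) ℂ) : (W * M).trace.re ≤ traceNorm M := by
  obtain ⟨U, hU, hM⟩ := exists_polar M
  have hWU : (W * U)ᴴ * (W * U) = 1 := by
    calc (W * U)ᴴ * (W * U) = Uᴴ * (Wᴴ * W) * U := by
          rw [conjTranspose_mul]; simp only [Matrix.mul_assoc]
      _ = 1 := by rw [hW, Matrix.mul_one, hU]
  have h := re_trace_unitary_mul_le hWU
    (posSemidef_mpow (posSemidef_conjTranspose_mul_self M) (1/2))
  rw [Matrix.mul_assoc, ← hM] at h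
  exact h

/-- The other half of the duality: the maximum is attained, at the adjoint of the polar factor. -/
lemma exists_re_trace_mul_eq_traceNorm {n : ℕ} (M : Matrix (Fin n) (Fin n) ℂ) :
    ∃ W : Matrix (Fin n) (Fin n) ℂ, Wᴴ * W = 1 ∧ (W * M).trace.re = traceNorm M := by
  obtain ⟨U, hU, hM⟩ := exists_polar M
  refine ⟨Uᴴ, ?_, ?_⟩
  · rw [conjTranspose_conjTranspose]; exact mul_eq_one_comm.mp hU
  · have : Uᴴ * M = mpow (Mᴴ * M) (1/2) := by
      conv_lhs => rw [hM]
      rw [← Matrix.mul_assoc, hU, Matrix.one_mul]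
    rw [this, traceNorm]

/-! ### The Powers–Størmer inequality -/

/-- Sign and absolute value `S`, `P` of a Hermitian matrix `X`; the sign of the eigenvalue `0` is
taken to be `1`, so that `S` is unitary. -/
lemma exists_sign {n : ℕ} {X : Matrix (Fin n) (Fin n) ℂ} (hX : X.IsHermitian) :
    ∃ S P : Matrix (Fin n) (Fin n) ℂ, Sᴴ * S = 1 ∧ S * X = P ∧ X * S = P ∧
      (P + X).PosSemidef ∧ (P - X).PosSemidef := by
  obtain ⟨V, l, hV, hV', hM, -, -⟩ := exists_spectral hX
  let s : Fin n → ℝ := fun i => if 0 ≤ l i then 1 else -1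
  have hs : ∀ i, s i * s i = 1 := by intro i; simp only [s]; split_ifs <;> norm_num
  have hsl : ∀ i, s i * l i = |l i| := by
    intro i; simp only [s]; split_ifs with h
    · rw [abs_of_nonneg h, one_mul]
    · rw [abs_of_neg (not_le.mp h)]; ring
  refine ⟨V * diagonal (fun i => (s i : ℂ)) * Vᴴ, V * diagonal (fun i => ((|l i| : ℝ) : ℂ)) * Vᴴ,
    ?_, ?_, ?_, ?_, ?_⟩
  · have : (V * diagonal (fun i => (s i : ℂ)) * Vᴴ)ᴴ = V * diagonal (fun i => (s i : ℂ)) * Vᴴ := by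
      simp only [conjTranspose_mul, conjTranspose_conjTranspose, diagonal_conjTranspose,
        Matrix.mul_assoc]
      congr 3
      funext i
      simp
    rw [this, conj_mul_conj hV]
    simp only [← Complex.ofReal_mul, hs, Complex.ofReal_one, diagonal_one, Matrix.mul_one, hV']
  · rw [hM, conj_mul_conj hV]
    simp only [← Complex.ofReal_mul, hsl]
  · rw [hM, conj_mul_conj hV]
    simp only [← Complex.ofReal_mul, mul_comm (l _), hsl]
  · rw [hM, ← Matrix.add_mul, ← Matrix.mul_add, diagonal_add]
    simp only [← Complex.ofReal_add]
    exact posSemidef_conj_diagonal V fun i => by linarith [neg_abs_le (l i)]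
  · rw [hM, ← Matrix.sub_mul, ← Matrix.mul_sub, diagonal_sub]
    simp only [← Complex.ofReal_sub]
    exact posSemidef_conj_diagonal V fun i => by linarith [le_abs_self (l i)]

/-- The Powers–Størmer inequality `‖A - B‖₂² ≤ ‖A² - B²‖₁`. -/
lemma powers_stormer {n : ℕ} {A B : Matrix (Fin n) (Fin n) ℂ}
    (hA : A.PosSemidef) (hB : B.PosSemidef) :
    (A * A).trace.re + (B * B).trace.re - 2 * (A * B).trace.re ≤ traceNorm (A * A - B * B) := by
  obtain ⟨S, P, hS, hSX, hXS, hp, hm⟩ := exists_sign (hA.1.sub hB.1)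
  refine le_trans ?_ (re_trace_mul_le_traceNorm hS _)
  -- `A² - B²` is the symmetrised product of `A - B` and `A + B`, and `S` commutes with `A - B`.
  have e1 : (S * (A * A - B * B)).trace = (P * (A + B)).trace := by
    have h1 : (2 : ℂ) • (S * (A * A - B * B)) =
        S * (A - B) * (A + B) + S * ((A + B) * (A - B)) := by
      rw [two_smul]; noncomm_ring
    have h2 : (S * ((A + B) * (A - B))).trace = (P * (A + B)).trace := by
      rw [← Matrix.mul_assoc, trace_mul_cycle, hXS]
    have h3 := congrArg trace h1
    rw [trace_smul, trace_add, h2, hSX, smul_eq_mul] at h3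
    linear_combination h3 / 2
  have e2 : (2 : ℂ) • (P * (A + B)) =
      (2 : ℂ) • ((A - B) * (A - B)) + (2 : ℂ) • ((P + (A - B)) * B) +
        (2 : ℂ) • ((P - (A - B)) * A) := by
    simp only [two_smul]; noncomm_ring
  have e3 : (A - B) * (A - B) = A * A + B * B - A * B - B * A := by noncomm_ring
  have e4 := congrArg (fun M => (trace M).re) e2
  have h1 := re_trace_mul_nonneg hp hB
  have h2 := re_trace_mul_nonneg hm hA
  rw [e1]
  simp only [trace_add, trace_smul, e3, trace_sub, trace_mul_comm B A, smul_eq_mul, Complex.mul_re,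
    Complex.add_re, Complex.sub_re, Complex.re_ofNat, Complex.im_ofNat, zero_mul, sub_zero] at e4
  linarith

/-! ### Bounding the trace distance by the fidelity -/

/-- Weighted Cauchy–Schwarz inequality for the Hilbert–Schmidt inner product, twisted by a
unitary. -/
lemma two_mul_re_trace_le {n : ℕ} {W : Matrix (Fin n) (Fin n) ℂ} (hW : Wᴴ * W = 1)
    (X Y : Matrix (Fin n) (Fin n) ℂ) :
    2 * (W * X * Yᴴ).trace.re ≤ (X * Xᴴ).trace.re + (Y * Yᴴ).trace.re := by
  have h := re_trace_mul_conjTranspose_nonneg (W * X - Y)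
  have e : (W * X - Y) * (W * X - Y)ᴴ =
      W * X * (Xᴴ * Wᴴ) - W * X * Yᴴ - Y * (W * X)ᴴ + Y * Yᴴ := by
    rw [conjTranspose_sub, ← conjTranspose_mul]; noncomm_ring
  have e1 : (W * X * (Xᴴ * Wᴴ)).trace = (X * Xᴴ).trace := by
    rw [← Matrix.mul_assoc, trace_mul_comm, Matrix.mul_assoc W, ← Matrix.mul_assoc, hW,
      Matrix.one_mul]
  have e2 : (Y * (W * X)ᴴ).trace.re = (W * X * Yᴴ).trace.re := by
    rw [← re_trace_conjTranspose, conjTranspose_mul, conjTranspose_conjTranspose]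
  rw [e, trace_add, trace_sub, trace_sub, e1] at h
  simp only [Complex.add_re, Complex.sub_re, e2] at h
  linarith

/-- With `A = √ρ`, `B = √τ` and `f = ‖A B‖₁`, this is the family of linear bounds equivalent to
`‖ρ - τ‖₁² ≤ (tr ρ + tr τ)² - 4 f²`. The factorisation `τ = C Cᴴ` in the proof is the one that makes
`Re tr (A Cᴴ)` equal to `f`, as in Uhlmann's theorem. -/
lemma traceNorm_sub_le {n : ℕ} {A B : Matrix (Fin n) (Fin n) ℂ}
    (hA : A.IsHermitian) (hB : B.IsHermitian) (c : ℝ) :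
    2 * c * traceNorm (A * A - B * B) ≤
      c ^ 2 * ((A * A).trace.re + (B * B).trace.re - 2 * traceNorm (A * B)) +
        ((A * A).trace.re + (B * B).trace.re + 2 * traceNorm (A * B)) := by
  obtain ⟨U, hU, hUf⟩ := exists_re_trace_mul_eq_traceNorm (A * B)
  obtain ⟨W, hW, hWd⟩ := exists_re_trace_mul_eq_traceNorm (A * A - B * B)
  have hU' : U * Uᴴ = 1 := mul_eq_one_comm.mp hU
  obtain ⟨C, hC⟩ : ∃ C, C = B * U := ⟨_, rfl⟩
  have hCC : C * Cᴴ = B * B := by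
    rw [hC, conjTranspose_mul, hB.eq, Matrix.mul_assoc, ← Matrix.mul_assoc U, hU', Matrix.one_mul]
  have hCA : (C * Aᴴ).trace.re = traceNorm (A * B) := by
    rw [← hUf, hC, hA.eq, trace_mul_cycle', ← Matrix.mul_assoc, trace_mul_cycle, Matrix.mul_assoc,
      trace_mul_comm, Matrix.mul_assoc, trace_mul_comm]
  have hAC : (A * Cᴴ).trace.re = traceNorm (A * B) := by
    rw [← hCA, ← re_trace_conjTranspose, conjTranspose_mul, conjTranspose_conjTranspose]
  have h1 := two_mul_re_trace_le hW ((c : ℂ) • (A - C)) (A + C)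
  have h2 := two_mul_re_trace_le hW (A + C) ((c : ℂ) • (A - C))
  have e : (2 : ℂ) • (W * (A * A - B * B)) =
      W * (A - C) * (A + C)ᴴ + W * (A + C) * (A - C)ᴴ := by
    rw [← hCC, conjTranspose_add, conjTranspose_sub, hA.eq, two_smul]; noncomm_ring
  have e' := congrArg (fun M => (trace M).re) e
  have em : (A - C) * (A - C)ᴴ = A * A + B * B - A * Cᴴ - C * Aᴴ := by
    rw [← hCC, conjTranspose_sub, hA.eq]; noncomm_ring
  have ep : (A + C) * (A + C)ᴴ = A * A + B * B + A * Cᴴ + C * Aᴴ := by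
    rw [← hCC, conjTranspose_add, hA.eq]; noncomm_ring
  simp only [conjTranspose_smul, Matrix.smul_mul, Matrix.mul_smul, em, ep, trace_smul, trace_add,
    trace_sub, smul_eq_mul, Complex.add_re, Complex.sub_re, Complex.mul_re, Complex.star_def,
    Complex.conj_ofReal, Complex.ofReal_re, Complex.ofReal_im, Complex.mul_im, zero_mul, sub_zero,
    add_zero, Complex.re_ofNat, Complex.im_ofNat, hAC, hCA, hWd] at h1 h2 e'
  have e'' := congrArg (fun x => c * x) e'
  linarith

/-! ### The inequalities for sub-normalized states -/

/-- **Fuchs–van de Graaf inequalities for sub-normalized states**: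
`Δ(ρ,τ) ≤ P(ρ,τ) ≤ √(2Δ(ρ,τ) - Δ(ρ,τ)²) ≤ √(2Δ(ρ,τ))`. -/
theorem fuchs_van_de_graaf {n : ℕ} (ρ τ : Matrix (Fin n) (Fin n) ℂ)
    (hρ : ρ.PosSemidef) (hρ1 : ρ.trace.re ≤ 1)
    (hτ : τ.PosSemidef) (hτ1 : τ.trace.re ≤ 1) :
    gTraceDist ρ τ ≤ purifiedDist ρ τ ∧
    purifiedDist ρ τ ≤ Real.sqrt (2 * gTraceDist ρ τ - (gTraceDist ρ τ) ^ 2) ∧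
    Real.sqrt (2 * gTraceDist ρ τ - (gTraceDist ρ τ) ^ 2) ≤ Real.sqrt (2 * gTraceDist ρ τ) := by
  have hA := posSemidef_mpow hρ (1/2)
  have hB := posSemidef_mpow hτ (1/2)
  have hAA := mpow_half_mul_self hρ
  have hBB := mpow_half_mul_self hτ
  have hfid : gFidelity ρ τ = (traceNorm (mpow ρ (1/2) * mpow τ (1/2)) +
      Real.sqrt ((1 - ρ.trace.re) * (1 - τ.trace.re))) ^ 2 := by
    have : mpow τ (1/2) * ρ * mpow τ (1/2) =
        (mpow ρ (1/2) * mpow τ (1/2))ᴴ * (mpow ρ (1/2) * mpow τ (1/2)) := by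
      rw [conjTranspose_mul, hA.1.eq, hB.1.eq]
      conv_lhs => rw [← hAA]
      simp only [Matrix.mul_assoc]
    rw [gFidelity, this, traceNorm]
  have hPS := powers_stormer hA hB
  have hAB : (mpow ρ (1/2) * mpow τ (1/2)).trace.re ≤
      traceNorm (mpow ρ (1/2) * mpow τ (1/2)) := by
    simpa using re_trace_mul_le_traceNorm (W := 1) (by simp) (mpow ρ (1/2) * mpow τ (1/2))
  have hU := traceNorm_sub_le hA.1 hB.1
  simp only [hAA, hBB] at hPS hU
  have hD : traceNorm (ρ - τ) ≤ ρ.trace.re + τ.trace.re := by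
    obtain ⟨W, hW, hWd⟩ := exists_re_trace_mul_eq_traceNorm (ρ - τ)
    have h1 := re_trace_unitary_mul_le hW hρ
    have h2 := re_trace_unitary_mul_le (U := -W) (by simpa using hW) hτ
    rw [Matrix.mul_sub, trace_sub, Complex.sub_re] at hWd
    rw [Matrix.neg_mul, trace_neg, Complex.neg_re] at h2
    linarith
  rw [purifiedDist, hfid, gTraceDist]
  generalize traceNorm (mpow ρ (1/2) * mpow τ (1/2)) = f at *
  generalize traceNorm (ρ - τ) = d at *
  generalize (mpow ρ (1/2) * mpow τ (1/2)).trace.re = x at *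
  generalize ρ.trace.re = r at *
  generalize τ.trace.re = t at *
  rw [Real.sqrt_mul (by linarith)]
  obtain ⟨p, hp⟩ : ∃ p, p = √(1 - r) := ⟨_, rfl⟩
  obtain ⟨q, hq⟩ : ∃ q, q = √(1 - t) := ⟨_, rfl⟩
  have hp0 : 0 ≤ p := hp ▸ Real.sqrt_nonneg _
  have hq0 : 0 ≤ q := hq ▸ Real.sqrt_nonneg _
  have hp2 : p ^ 2 = 1 - r := by rw [hp, Real.sq_sqrt (by linarith)]
  have hq2 : q ^ 2 = 1 - t := by rw [hq, Real.sq_sqrt (by linarith)]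
  rw [← hp, ← hq]
  obtain rfl : r = 1 - p ^ 2 := by linarith
  obtain rfl : t = 1 - q ^ 2 := by linarith
  refine ⟨?_, ?_, ?_⟩
  · apply Real.le_sqrt_of_sq_le
    -- the scalar counterpart of `hU`, for the deficits `1 - tr ρ = p²` and `1 - tr τ = q²`
    have hs : ∀ c : ℝ, 2 * c * |1 - p ^ 2 - (1 - q ^ 2)| ≤ c ^ 2 * (p - q) ^ 2 + (p + q) ^ 2 := by
      intro c
      rcases abs_cases (1 - p ^ 2 - (1 - q ^ 2)) with ⟨h, -⟩ | ⟨h, -⟩ <;> rw [h]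
      · nlinarith [sq_nonneg (c * (p - q) + (p + q))]
      · nlinarith [sq_nonneg (c * (p - q) - (p + q))]
    have hdisc := discrim_le_zero (a := 1 - (f + p * q))
      (b := -2 * (1 / 2 * d + 1 / 2 * |1 - p ^ 2 - (1 - q ^ 2)|)) (c := 1 + (f + p * q)) (by
        intro c
        nlinarith [hs c, hU c])
    rw [discrim] at hdisc
    nlinarith
  · apply Real.sqrt_le_sqrt
    have h1 : 1 / 2 * d + 1 / 2 * |1 - p ^ 2 - (1 - q ^ 2)| ≤ 1 := by
      rcases abs_cases (1 - p ^ 2 - (1 - q ^ 2)) with ⟨h, -⟩ | ⟨h, -⟩ <;> rw [h] <;>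
        nlinarith [sq_nonneg p, sq_nonneg q]
    -- `√(1 - tr ρ) √(1 - tr τ)` is at least the smaller deficit `min (p²) (q²)`
    have h2 : 1 - (1 / 2 * d + 1 / 2 * |1 - p ^ 2 - (1 - q ^ 2)|) ≤ f + p * q := by
      rcases abs_cases (1 - p ^ 2 - (1 - q ^ 2)) with ⟨h, h'⟩ | ⟨h, h'⟩ <;> rw [h]
      · have : p ≤ q := by nlinarith
        nlinarith
      · have : q ≤ p := by nlinarith
        nlinarith
    nlinarith
  · apply Real.sqrt_le_sqrt
    nlinarith [sq_nonneg (1 / 2 * d + 1 / 2 * |1 - p ^ 2 - (1 - q ^ 2)|)]
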